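/- arXiv:1002.1377 — 2 statements merged into one kernel-verified Lean document; each statement's English description precedes it below -/
import Mathlib

section
/- Let T be the infinite binary tree with weight w(t) = (1+|t|)^{-β} where β > 2, and let V* : ℓ₁(T) → ℓ₂(T,W) be the operator (V*μ)(t) = Σ_{u ⪰ t} μ(u). Then there exists a constant C₂ = C₂(β) > 0 such that for all integers n ≥ 2, e_n(V*) ≤ C₂ · (ln n)^{1-β/2} · n^{-1/2}. -/
open scoped ENNReal

/-- A node of the infinite binary tree `T` is a finite binary string;
its level `|t|` is its length. -/
abbrev Node : Type := List Bool

/-- `μ` belongs to `ℓ₁(T)`, i.e. `Σ_t |μ(t)| < ∞`. -/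
def MemL1 (μ : Node → ℝ) : Prop := Summable fun t : Node => |μ t|

/-- The `ℓ₁(T)` norm `‖μ‖₁ = Σ_t |μ(t)|`. -/
noncomputable def l1Norm (μ : Node → ℝ) : ℝ := ∑' t : Node, |μ t|

/-- `(V*μ)(t) = Σ_{u ⪰ t} μ(u)`, the sum over all nodes `u` having `t` as a prefix
(including `u = t`). -/
noncomputable def Vstar (μ : Node → ℝ) (t : Node) : ℝ := ∑' u : {u : Node // t <+: u}, μ u.1

/-- The weight `w(t) = (1 + |t|)^{-β}`. -/
noncomputable def wgt (β : ℝ) (t : Node) : ℝ := ((1 : ℝ) + (t.length : ℝ)) ^ (-β)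

/-- The squared distance of `f, g` in the weighted space `ℓ₂(T,W)`,
`Σ_t w(t) (f(t) - g(t))²`, computed in `ℝ≥0∞`. -/
noncomputable def distSqW (β : ℝ) (f g : Node → ℝ) : ℝ≥0∞ :=
  ∑' t : Node, ENNReal.ofReal (wgt β t * (f t - g t) ^ 2)

/-!
The image of the unit ball lies in the closed absolutely convex hull of the indicator functions of
the paths from the root. Let `L` be of order `log n`. The coordinates on the levels below `L` are
rounded to a grid. Each block of levels `a ≤ |t| < 2 * a` beyond `L` sees at most `2 ^ (2 * a + 1)`
different paths, each of squared norm at most `a ^ (1 - β)` there, so by Maurey's empirical method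
`m` samples, that is `O(m * a)` bits, give squared error `a ^ (1 - β) / (m + 1)`. For `β > 2` the
bits can be distributed geometrically over the blocks `a = 2 ^ j * L`, with total squared error of
order `L ^ (2 - β) / n`.
-/

open Function Set
open scoped Pointwise

section Maurey

variable {E : Type*} [NormedAddCommGroup E] [InnerProductSpace ℝ E] {S : Set E} {x : E} {r : ℝ}

lemma exists_inner_le_of_mem_convexHull (hx : x ∈ convexHull ℝ S) (y : E) :
    ∃ s ∈ S, inner ℝ y s ≤ inner ℝ y x :=
  ((innerₗ E y).concaveOn convex_univ).exists_le_of_mem_convexHull (subset_univ S) hx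

lemma exists_norm_add_sub_sq_le (hx : x ∈ convexHull ℝ S) (hS : ∀ s ∈ S, ‖s‖ ^ 2 ≤ r) (y : E) :
    ∃ s ∈ S, ‖y + (s - x)‖ ^ 2 ≤ ‖y‖ ^ 2 + r := by
  obtain ⟨s, hs, hys⟩ := exists_inner_le_of_mem_convexHull hx (y - x)
  refine ⟨s, hs, ?_⟩
  calc ‖y + (s - x)‖ ^ 2 = ‖y - x‖ ^ 2 + 2 * inner ℝ (y - x) s + ‖s‖ ^ 2 := by
        rw [← norm_add_sq_real]; congr 2; abel
    _ ≤ ‖y - x‖ ^ 2 + 2 * inner ℝ (y - x) x + r := by linarith [hS s hs]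
    _ = ‖y‖ ^ 2 - ‖x‖ ^ 2 + r := by
        rw [norm_sub_sq_real, inner_sub_left, real_inner_self_eq_norm_sq]; ring
    _ ≤ ‖y‖ ^ 2 + r := by linarith [sq_nonneg ‖x‖]

lemma exists_norm_sum_sub_smul_sq_le (hx : x ∈ convexHull ℝ S) (hS : ∀ s ∈ S, ‖s‖ ^ 2 ≤ r)
    (m : ℕ) :
    ∃ s : Fin m → E, (∀ i, s i ∈ S) ∧
      ‖∑ i, s i - ((m : ℝ) + 1) • x‖ ^ 2 ≤ ((m : ℝ) + 1) * r := by
  induction m with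
  | zero =>
    obtain ⟨s, hs, hxs⟩ := convexOn_univ_norm.exists_ge_of_mem_convexHull (subset_univ S) hx
    refine ⟨Fin.elim0, fun i => i.elim0, ?_⟩
    simpa using (pow_le_pow_left₀ (norm_nonneg x) hxs 2).trans (hS s hs)
  | succ m ih =>
    obtain ⟨s, hs, hsum⟩ := ih
    obtain ⟨v, hv, hstep⟩ :=
      exists_norm_add_sub_sq_le hx hS (∑ i, s i - ((m : ℝ) + 1) • x)
    refine ⟨Fin.snoc s v, Fin.lastCases (by simpa using hv) (by simpa using hs), ?_⟩
    have hsplit : ∑ i, (Fin.snoc s v : Fin (m + 1) → E) i - ((↑(m + 1) : ℝ) + 1) • x =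
        (∑ i, s i - ((m : ℝ) + 1) • x) + (v - x) := by
      simp only [Fin.sum_univ_castSucc, Fin.snoc_castSucc, Fin.snoc_last]
      push_cast
      module
    rw [hsplit]
    push_cast
    linarith

/-- Maurey's empirical method, derandomised. Averaging `m` vectors over `m + 1` amounts to a
zeroth sample `0`, so that the bound also covers `m = 0`. -/
theorem exists_norm_smul_sum_sub_sq_le (hx : x ∈ convexHull ℝ S) (hS : ∀ s ∈ S, ‖s‖ ^ 2 ≤ r)
    (m : ℕ) :
    ∃ s : Fin m → E, (∀ i, s i ∈ S) ∧
      ‖((m : ℝ) + 1)⁻¹ • ∑ i, s i - x‖ ^ 2 ≤ r / ((m : ℝ) + 1) := by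
  obtain ⟨s, hs, hsum⟩ := exists_norm_sum_sub_smul_sq_le hx hS m
  have hm : (0 : ℝ) < (m : ℝ) + 1 := by positivity
  refine ⟨s, hs, ?_⟩
  rw [← inv_smul_smul₀ hm.ne' x, ← smul_sub, norm_smul, mul_pow,
    Real.norm_of_nonneg (by positivity), inv_pow, inv_mul_le_iff₀ (by positivity)]
  calc _ ≤ ((m : ℝ) + 1) * r := by simpa [smul_smul, hm.ne'] using hsum
    _ = _ := by field_simp

end Maurey

section AbsConvex

variable {ι M : Type*} [AddCommGroup M] [Module ℝ M] {K : Set M} {g : ι → M} {c : ι → ℝ}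

lemma sum_smul_mem_of_absConvex (hK : AbsConvex ℝ K) (hK₀ : K.Nonempty)
    {s : Finset ι} (hg : ∀ i ∈ s, g i ∈ K) (hc : ∑ i ∈ s, |c i| ≤ 1) : ∑ i ∈ s, c i • g i ∈ K := by
  have hc₀ : 0 ≤ ∑ i ∈ s, |c i| := Finset.sum_nonneg fun i _ => abs_nonneg (c i)
  have hsign : ∀ i ∈ s, (SignType.sign (c i) : ℝ) • g i ∈ K := fun i hi =>
    hK.1.smul_mem (by cases SignType.sign (c i) <;> simp) (hg i hi)
  have hsum : ∑ i ∈ s, |c i| • (SignType.sign (c i) : ℝ) • g i = ∑ i ∈ s, c i • g i :=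
    Finset.sum_congr rfl fun i _ => by rw [smul_smul, abs_mul_sign]
  rcases hc₀.eq_or_lt with h | h
  · have hzero : ∀ i ∈ s, c i • g i = 0 := fun i hi => by
      have := (Finset.sum_eq_zero_iff_of_nonneg fun i _ => abs_nonneg (c i)).1 h.symm i hi
      rw [abs_eq_zero.1 this, zero_smul]
    rw [Finset.sum_eq_zero hzero]
    exact hK.1.zero_mem hK₀
  · have hmean := hK.2.centerMass_mem (fun i _ => abs_nonneg (c i)) h hsign
    have := hK.1.smul_mem (by rwa [Real.norm_of_nonneg hc₀]) hmean
    rwa [Finset.centerMass, smul_inv_smul₀ h.ne', hsum] at this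

lemma hasSum_smul_mem_of_absConvex [TopologicalSpace M] (hK : AbsConvex ℝ K) (hK₀ : K.Nonempty)
    (hKc : IsClosed K) (hg : ∀ i, g i ∈ K) (hc : Summable fun i => |c i|)
    (hc₁ : ∑' i, |c i| ≤ 1) {x : M} (hx : HasSum (fun i => c i • g i) x) : x ∈ K :=
  hKc.mem_of_tendsto hx <| .of_forall fun s =>
    sum_smul_mem_of_absConvex hK hK₀ (fun i _ => hg i) <|
      (hc.sum_le_tsum s fun i _ => abs_nonneg (c i)).trans hc₁

end AbsConvex

section Nets

variable {α ι : Type*} {w : α → ℝ} {F : Set (α → ℝ)}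

/-- The part of the squared distance of `ℓ₂(α, w)` that is carried by the coordinates in `B`. -/
noncomputable def distSqOn (w : α → ℝ) (B : Set α) (f g : α → ℝ) : ℝ≥0∞ :=
  ∑' t : B, ENNReal.ofReal (w t * (f t - g t) ^ 2)

/-- On the coordinates in `B`, the family `F` is covered by `2 ^ b` balls of squared radius `r`
of `ℓ₂(α, w)`: `b` is the number of bits that describe an element of `F` to this accuracy. -/
def HasNet (w : α → ℝ) (F : Set (α → ℝ)) (B : Set α) (b : ℕ) (r : ℝ≥0∞) : Prop :=
  ∃ N : Finset (α → ℝ), N.card ≤ 2 ^ b ∧ ∀ f ∈ F, ∃ g ∈ N, distSqOn w B f g ≤ r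

lemma HasNet.mono {B : Set α} {b b' : ℕ} {r r' : ℝ≥0∞} (h : HasNet w F B b r) (hb : b ≤ b')
    (hr : r ≤ r') : HasNet w F B b' r' := by
  obtain ⟨N, hN, hcover⟩ := h
  refine ⟨N, hN.trans (Nat.pow_le_pow_right two_pos hb), fun f hf => ?_⟩
  obtain ⟨g, hg, hfg⟩ := hcover f hf
  exact ⟨g, hg, hfg.trans hr⟩

lemma distSqOn_congr_right {B : Set α} {f g h : α → ℝ} (hgh : EqOn g h B) :
    distSqOn w B f g = distSqOn w B f h :=
  tsum_congr fun t => by rw [hgh t.2]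

lemma exists_eqOn_of_pairwise_disjoint {A : ι → Set α} (hA : Pairwise (Disjoint on A))
    (G : ι → α → ℝ) : ∃ g : α → ℝ, ∀ i, EqOn g (G i) (A i) := by
  classical
  refine ⟨fun t => if h : ∃ i, t ∈ A i then G h.choose t else 0, fun i t ht => ?_⟩
  have h : ∃ i, t ∈ A i := ⟨i, ht⟩
  have hi : h.choose = i := by_contra fun hne => (hA hne).ne_of_mem h.choose_spec ht rfl
  simp only [dif_pos h, hi]

theorem HasNet.iUnion {A : ι → Set α} (hA : Pairwise (Disjoint on A)) {b : ι → ℕ} {r : ι → ℝ≥0∞}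
    (h : ∀ i, HasNet w F (A i) (b i) (r i)) {s : Finset ι} (hb : ∀ i ∉ s, b i = 0) :
    HasNet w F (⋃ i, A i) (∑ i ∈ s, b i) (∑' i, r i) := by
  classical
  choose N hN hcover using h
  choose glue hglue using fun G : ι → α → ℝ => exists_eqOn_of_pairwise_disjoint hA G
  have hsingle (i : ι) : ∃ c, i ∉ s → N i ⊆ {c} := by
    by_cases hi : i ∈ s
    · exact ⟨0, fun h => absurd hi h⟩
    · have hcard : (N i).card ≤ 1 := by simpa [hb i hi] using hN i
      obtain ⟨c, hc⟩ := Finset.card_le_one_iff_subset_singleton.1 hcard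
      exact ⟨c, fun _ => hc⟩
  choose c hc using hsingle
  refine ⟨(s.pi N).image fun φ => glue fun i => if hi : i ∈ s then φ i hi else c i, ?_, ?_⟩
  · calc _ ≤ (s.pi N).card := Finset.card_image_le
      _ = ∏ i ∈ s, (N i).card := Finset.card_pi s N
      _ ≤ ∏ i ∈ s, 2 ^ b i := Finset.prod_le_prod' fun i _ => hN i
      _ = 2 ^ ∑ i ∈ s, b i := Finset.prod_pow_eq_pow_sum s b 2
  · intro f hf
    choose G hGN hG using fun i => hcover i f hf
    refine ⟨_, Finset.mem_image_of_mem _ (Finset.mem_pi.2 fun i _ => hGN i), ?_⟩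
    have hGc : (fun i => if i ∈ s then G i else c i) = G := by
      ext1 i
      split_ifs with hi
      · rfl
      · exact (Finset.mem_singleton.1 (hc i hi (hGN i))).symm
    simp only [dite_eq_ite, hGc]
    calc distSqOn w (⋃ i, A i) f (glue G) ≤ ∑' i, distSqOn w (A i) f (glue G) :=
          ENNReal.tsum_iUnion_le_tsum (fun t => .ofReal (w t * (f t - glue G t) ^ 2)) A
      _ ≤ ∑' i, r i := ENNReal.tsum_le_tsum fun i =>
          (distSqOn_congr_right (hglue G i)).trans_le (hG i)

theorem HasNet.union {A B : Set α} (hAB : Disjoint A B) {a b : ℕ} {r r' : ℝ≥0∞}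
    (hA : HasNet w F A a r) (hB : HasNet w F B b r') : HasNet w F (A ∪ B) (a + b) (r + r') := by
  have hnets : ∀ i, HasNet w F (cond i A B) (cond i a b) (cond i r r') := by simp [hA, hB]
  have := HasNet.iUnion (pairwise_disjoint_on_bool.2 hAB) hnets (s := .univ) (by simp)
  rwa [Fintype.sum_bool, tsum_bool, add_comm (cond false r r'), ← union_eq_iUnion] at this

lemma exists_abs_sub_le_of_abs_le_one {q : ℕ} (hq : 0 < q) {x : ℝ} (hx : |x| ≤ 1) :
    ∃ i < q, |x - ((2 * i + 1) / q - 1)| ≤ 1 / q := by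
  obtain ⟨hx₀, hx₁⟩ := abs_le.1 hx
  have hq' : (0 : ℝ) < q := by exact_mod_cast hq
  obtain rfl | hlt := hx₁.eq_or_lt
  · refine ⟨q - 1, by omega, ?_⟩
    have : (2 * ((q - 1 : ℕ) : ℝ) + 1) / q - 1 = 1 - 1 / q := by
      rw [Nat.cast_pred hq]; field_simp; ring
    rw [this, sub_sub_cancel, abs_of_pos (by positivity)]
  · have hfloor : (⌊(x + 1) * q / 2⌋₊ : ℝ) ≤ (x + 1) * q / 2 :=
      Nat.floor_le (by nlinarith)
    have hfloor' := Nat.lt_floor_add_one ((x + 1) * q / 2)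
    refine ⟨⌊(x + 1) * q / 2⌋₊, (Nat.floor_lt (by nlinarith)).2 (by nlinarith), ?_⟩
    have : x - ((2 * (⌊(x + 1) * q / 2⌋₊ : ℝ) + 1) / q - 1)
        = ((x + 1) * q - 2 * ⌊(x + 1) * q / 2⌋₊ - 1) / q := by field_simp; ring
    rw [this, abs_div, abs_of_pos hq']
    gcongr
    rw [abs_le]
    constructor <;> linarith

lemma hasNet_singleton {t : α} (hw : w t ≤ 1) (hF : ∀ f ∈ F, |f t| ≤ 1) (p : ℕ) :
    HasNet w F {t} p (ENNReal.ofReal (1 / 4 ^ p)) := by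
  classical
  refine ⟨(Finset.range (2 ^ p)).image fun (i : ℕ) _ => (2 * (i : ℝ) + 1) / 2 ^ p - 1,
    Finset.card_image_le.trans (Finset.card_range _).le, fun f hf => ?_⟩
  obtain ⟨i, hi, hfi⟩ := exists_abs_sub_le_of_abs_le_one (pow_pos two_pos p) (hF f hf)
  refine ⟨_, Finset.mem_image_of_mem _ (Finset.mem_range.2 hi), ?_⟩
  rw [distSqOn, tsum_singleton t fun t => ENNReal.ofReal (w t * (f t - _) ^ 2)]
  refine ENNReal.ofReal_le_ofReal ?_
  push_cast at hfi
  calc w t * (f t - ((2 * i + 1) / 2 ^ p - 1)) ^ 2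
      ≤ 1 * |f t - ((2 * i + 1) / 2 ^ p - 1)| ^ 2 := by rw [sq_abs]; gcongr
    _ ≤ (1 / 2 ^ p) ^ 2 := by rw [one_mul]; gcongr
    _ = 1 / 4 ^ p := by rw [div_pow, one_pow, ← pow_mul, mul_comm, pow_mul]; norm_num

theorem hasNet_coe_of_abs_le_one {B : Finset α} (hw : ∀ t ∈ B, w t ≤ 1)
    (hF : ∀ f ∈ F, ∀ t ∈ B, |f t| ≤ 1) (p : ℕ) :
    HasNet w F B (p * B.card) (ENNReal.ofReal (B.card / 4 ^ p)) := by
  have hdisj : Pairwise (Disjoint on fun t : B => ({t.1} : Set α)) := fun s t hst =>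
    disjoint_singleton.2 (Subtype.coe_injective.ne hst)
  have := HasNet.iUnion hdisj (s := .univ)
    (fun t => hasNet_singleton (hw t t.2) (fun f hf => hF f hf t t.2) p) (by simp)
  convert this using 1
  · simp
  · simp [mul_comm]
  · rw [tsum_fintype, Finset.sum_const, nsmul_eq_mul, Finset.card_univ, Fintype.card_coe,
      ← ENNReal.ofReal_natCast, ← ENNReal.ofReal_mul (Nat.cast_nonneg _), mul_one_div]

/-- The coordinates in `B`, scaled so that the norm of `ℓ₂(B, w)` becomes the Euclidean norm. -/
noncomputable def weightedRestrict (w : α → ℝ) (B : Finset α) :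
    (α → ℝ) →L[ℝ] EuclideanSpace ℝ B :=
  (EuclideanSpace.equiv B ℝ).symm.toContinuousLinearMap ∘L
    ContinuousLinearMap.pi fun t : B => √(w t) • ContinuousLinearMap.proj t.1

lemma weightedRestrict_apply (B : Finset α) (f : α → ℝ) (t : B) :
    weightedRestrict w B f t = √(w t) * f t :=
  rfl

lemma norm_weightedRestrict_sq {B : Finset α} (hw : ∀ t ∈ B, 0 ≤ w t) (f : α → ℝ) :
    ‖weightedRestrict w B f‖ ^ 2 = ∑ t ∈ B, w t * f t ^ 2 := by
  rw [EuclideanSpace.norm_sq_eq, ← Finset.sum_coe_sort B fun t => w t * f t ^ 2]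
  refine Finset.sum_congr rfl fun t _ => ?_
  rw [weightedRestrict_apply, Real.norm_eq_abs, sq_abs, mul_pow, Real.sq_sqrt (hw t t.2)]

lemma distSqOn_coe {B : Finset α} (hw : ∀ t ∈ B, 0 ≤ w t) (f g : α → ℝ) :
    distSqOn w B f g = ENNReal.ofReal (‖weightedRestrict w B g - weightedRestrict w B f‖ ^ 2) := by
  rw [norm_sub_rev, ← map_sub, norm_weightedRestrict_sq hw,
    ENNReal.ofReal_sum_of_nonneg fun t ht => mul_nonneg (hw t ht) (sq_nonneg _)]
  exact Finset.tsum_subtype B fun t => ENNReal.ofReal (w t * (f t - g t) ^ 2)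

theorem hasNet_coe_of_mem_absConvexHull {B : Finset α} (hw : ∀ t ∈ B, 0 ≤ w t)
    {V : Finset (α → ℝ)} {b : ℕ} (hV : V.card ≤ 2 ^ b) {r : ℝ}
    (hVr : ∀ v ∈ V, ∑ t ∈ B, w t * v t ^ 2 ≤ r)
    (hF : ∀ f ∈ F, weightedRestrict w B f ∈ absConvexHull ℝ (weightedRestrict w B '' V)) (m : ℕ) :
    HasNet w F B (m * (b + 1)) (ENNReal.ofReal (r / (m + 1))) := by
  classical
  set R := weightedRestrict w B
  set S := V ∪ V.image Neg.neg with hS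
  have hScard : S.card ≤ 2 ^ (b + 1) := by
    calc S.card ≤ V.card + V.card :=
          (Finset.card_union_le V _).trans (Nat.add_le_add_left Finset.card_image_le _)
      _ ≤ 2 ^ (b + 1) := by rw [pow_succ]; omega
  have hSr : ∀ v ∈ R '' S, ‖v‖ ^ 2 ≤ r := by
    rintro _ ⟨v, hv, rfl⟩
    rw [norm_weightedRestrict_sq hw]
    rcases Finset.mem_union.1 hv with hv | hv
    · exact hVr v hv
    · obtain ⟨u, hu, rfl⟩ := Finset.mem_image.1 hv
      simpa using hVr u hu
  have hRS : R '' V ∪ -(R '' V) = R '' S := by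
    simp only [hS, Finset.coe_union, Finset.coe_image, image_union, ← image_neg_eq_neg,
      image_image, map_neg]
  refine ⟨(Fintype.piFinset fun _ : Fin m => S).image fun s => ((m : ℝ) + 1)⁻¹ • ∑ i, s i, ?_, ?_⟩
  · refine Finset.card_image_le.trans ?_
    calc (Fintype.piFinset fun _ : Fin m => S).card = S.card ^ m := by simp
      _ ≤ (2 ^ (b + 1)) ^ m := Nat.pow_le_pow_left hScard m
      _ = 2 ^ (m * (b + 1)) := by rw [← pow_mul, mul_comm]
  · intro f hf
    have hRf : R f ∈ convexHull ℝ (R '' S) := by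
      rw [← hRS, convexHull_union_neg_eq_absConvexHull]
      exact hF f hf
    obtain ⟨v, hv, hvf⟩ := exists_norm_smul_sum_sub_sq_le hRf hSr m
    choose s hs hsv using hv
    refine ⟨_, Finset.mem_image_of_mem _ (Fintype.mem_piFinset.2 hs), ?_⟩
    rw [distSqOn_coe hw]
    refine ENNReal.ofReal_le_ofReal ?_
    simpa [R, hsv] using hvf

end Nets

lemma exists_geometric_allocation {ρ : ℝ} (hρ₀ : 0 ≤ ρ) (hρ₁ : ρ < 1) {c : ℕ → ℕ}
    (hc : ∀ j, 0 < c j) (k : ℕ) :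
    ∃ (m : ℕ → ℕ) (s : Finset ℕ), (∀ j ∉ s, m j = 0) ∧ ∑ j ∈ s, m j * c j ≤ k ∧
      ∀ j, (1 - ρ) * k * ρ ^ j ≤ c j * (m j + 1) := by
  set share : ℕ → ℝ := fun j => (1 - ρ) * k * ρ ^ j
  have hρ : 0 < 1 - ρ := sub_pos.2 hρ₁
  have hc' (j : ℕ) : (0 : ℝ) < c j := by exact_mod_cast hc j
  have hshare₀ (j : ℕ) : 0 ≤ share j := by positivity
  have hsum : HasSum share k := by
    have := (hasSum_geometric_of_lt_one hρ₀ hρ₁).mul_left ((1 - ρ) * k)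
    rwa [mul_right_comm, mul_inv_cancel₀ hρ.ne', one_mul] at this
  obtain ⟨J, hJ⟩ := Filter.eventually_atTop.1 <|
    hsum.summable.tendsto_atTop_zero.eventually_lt_const one_pos
  refine ⟨fun j => ⌊share j / c j⌋₊, .range J, fun j hj => ?_, ?_, fun j => ?_⟩
  · have hcj : (1 : ℝ) ≤ c j := by exact_mod_cast hc j
    rw [Nat.floor_eq_zero, div_lt_one (hc' j)]
    exact (hJ j (by simpa using hj)).trans_le hcj
  · have : ∑ j ∈ .range J, (⌊share j / c j⌋₊ : ℝ) * c j ≤ k :=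
      calc ∑ j ∈ .range J, (⌊share j / c j⌋₊ : ℝ) * c j ≤ ∑ j ∈ .range J, share j :=
            Finset.sum_le_sum fun j _ => (le_div_iff₀ (hc' j)).1 <|
              Nat.floor_le (div_nonneg (hshare₀ j) (hc' j).le)
        _ ≤ k := sum_le_hasSum _ (fun j _ => hshare₀ j) hsum
    exact_mod_cast this
  · rw [← div_le_iff₀' (hc' j)]
    exact (Nat.lt_floor_add_one _).le

lemma pairwise_disjoint_Ico_two_pow_mul (L : ℕ) :
    Pairwise (Disjoint on fun j => Ico (2 ^ j * L) (2 ^ (j + 1) * L)) :=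
  ((pow_right_mono₀ one_le_two).mul_const L.zero_le).pairwise_disjoint_on_Ico_succ

lemma iUnion_Ico_two_pow_mul {L : ℕ} (hL : 0 < L) :
    ⋃ j, Ico (2 ^ j * L) (2 ^ (j + 1) * L) = Ici L := by
  have hmono : StrictMono fun j => 2 ^ j * L := (pow_right_strictMono₀ one_lt_two).mul_const hL
  simpa using iUnion_Ico_map_succ_eq_Ici (fun j => hmono.monotone bot_le)
    hmono.not_bddAbove_range_of_isSuccArchimedean

lemma rpow_one_sub_div_le {β ρ : ℝ} (hρ₀ : 0 < ρ) (hρ₁ : ρ < 1) (hρβ : ρ ^ 2 = 2 ^ (2 - β))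
    {L k : ℕ} (hL : 0 < L) (hk : 0 < k) {j m : ℕ}
    (hm : (1 - ρ) * k * ρ ^ j ≤ (4 * (2 ^ j * L) : ℕ) * (m + 1)) :
    ((2 ^ j * L : ℕ) : ℝ) ^ (1 - β) / (m + 1) ≤
      4 * (L : ℝ) ^ (2 - β) / ((1 - ρ) * k) * ρ ^ j := by
  have hρ : 0 < 1 - ρ := sub_pos.2 hρ₁
  have hL' : (0 : ℝ) < L := by exact_mod_cast hL
  have hpow : ((2 ^ j * L : ℕ) : ℝ) ^ (2 - β) = L ^ (2 - β) * (ρ ^ j) ^ 2 := by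
    push_cast
    rw [Real.mul_rpow (by positivity) hL'.le, ← Real.rpow_natCast, ← Real.rpow_mul two_pos.le,
      mul_comm (j : ℝ), Real.rpow_mul two_pos.le, ← hρβ, Real.rpow_natCast, ← pow_mul, ← pow_mul,
      mul_comm, mul_comm 2 j]
  set a : ℝ := ((2 ^ j * L : ℕ) : ℝ) with ha
  have ha₀ : 0 < a := by positivity
  calc a ^ (1 - β) / (m + 1) = 4 * a ^ (2 - β) / (4 * a * (m + 1)) := by
        rw [show 2 - β = 1 - β + 1 by ring, Real.rpow_add_one ha₀.ne']
        field_simp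
    _ ≤ 4 * a ^ (2 - β) / ((1 - ρ) * k * ρ ^ j) := by
        refine div_le_div_of_nonneg_left (by positivity) (by positivity) ?_
        push_cast [ha] at hm ⊢
        exact hm
    _ = 4 * (L : ℝ) ^ (2 - β) / ((1 - ρ) * k) * ρ ^ j := by
        rw [hpow]
        field_simp

lemma exists_inv_two_pow_le_mul_rpow (s : ℝ) :
    ∃ D : ℝ, 0 < D ∧ ∀ L : ℕ, 0 < L → ((2 : ℝ) ^ L)⁻¹ ≤ D * (L : ℝ) ^ s := by
  have htendsto := (tendsto_rpow_mul_exp_neg_mul_atTop_nhds_zero (-s) (Real.log 2)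
    (Real.log_pos one_lt_two)).comp tendsto_natCast_atTop_atTop
  obtain ⟨D, hD⟩ := htendsto.bddAbove_range
  refine ⟨max D 1, by positivity, fun L hL => ?_⟩
  have hLD : (L : ℝ) ^ (-s) * Real.exp (-Real.log 2 * L) ≤ D := hD (mem_range_self L)
  have hexp : Real.exp (-Real.log 2 * L) = ((2 : ℝ) ^ L)⁻¹ := by
    rw [neg_mul, Real.exp_neg, mul_comm, Real.exp_nat_mul, Real.exp_log two_pos]
  rw [hexp, Real.rpow_neg (Nat.cast_nonneg L), inv_mul_le_iff₀ (by positivity), mul_comm] at hLD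
  exact hLD.trans (by gcongr; exact le_max_left D 1)

lemma four_mul_log_mul_two_pow_add_half_le {n : ℕ} (hn : 2 ≤ n) :
    4 * Nat.log 64 n * 2 ^ (Nat.log 64 n + 1) + n / 2 ≤ n - 1 := by
  have hpow : 64 ^ Nat.log 64 n ≤ n := Nat.pow_log_le_self 64 (by omega)
  generalize Nat.log 64 n = l at *
  obtain rfl | hl := Nat.eq_zero_or_pos l
  · omega
  have hlt : l < 2 ^ l := Nat.lt_two_pow_self
  have hx : 2 ≤ 2 ^ l := Nat.le_self_pow hl.ne' 2
  have h64 : 64 ^ l = (2 ^ l) ^ 6 := by rw [← pow_mul, mul_comm, pow_mul]; norm_num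
  have hsmall : 16 * l * 2 ^ l + 2 ≤ 64 ^ l := by
    rw [h64]
    generalize 2 ^ l = x at *
    calc 16 * l * x + 2 ≤ 16 * (l + 1) * x := by nlinarith
      _ ≤ 16 * x * x := by gcongr; omega
      _ ≤ x ^ 4 * x * x := by gcongr; exact Nat.pow_le_pow_left hx 4
      _ = x ^ 6 := by ring
  have : 4 * l * 2 ^ (l + 1) = 8 * (l * 2 ^ l) := by ring
  rw [mul_assoc] at hsmall
  omega

lemma two_pow_log_div_four_pow_log_le {n : ℕ} (hn : 0 < n) :
    (2 : ℝ) ^ (Nat.log 64 n + 1) / 4 ^ (4 * Nat.log 64 n) ≤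
      256 * (2 ^ (Nat.log 64 n + 1))⁻¹ / n := by
  have hlt : (n : ℝ) ≤ 64 ^ (Nat.log 64 n + 1) := by
    exact_mod_cast (Nat.lt_pow_succ_log_self (by norm_num) n).le
  generalize Nat.log 64 n = l at *
  have h256 : (4 : ℝ) ^ (4 * l) = 2 ^ l * 2 ^ l * 64 ^ l := by
    rw [← mul_pow, ← mul_pow, pow_mul]
    norm_num
  calc (2 : ℝ) ^ (l + 1) / 4 ^ (4 * l) = 256 * (2 ^ (l + 1))⁻¹ / 64 ^ (l + 1) := by
        rw [h256]
        field_simp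
        ring
    _ ≤ 256 * (2 ^ (l + 1))⁻¹ / n := by gcongr

lemma natLog_add_one_rpow_le {s : ℝ} (hs : s ≤ 0) {b n : ℕ} (hb : 1 < b) (hn : 1 < n) :
    ((Nat.log b n + 1 : ℕ) : ℝ) ^ s ≤ (Real.log n / Real.log b) ^ s := by
  have hlogb : 0 < Real.log b := Real.log_pos (by exact_mod_cast hb)
  have hlogn : 0 < Real.log n := Real.log_pos (by exact_mod_cast hn)
  refine Real.rpow_le_rpow_of_nonpos (div_pos hlogn hlogb) ((div_le_iff₀ hlogb).2 ?_) hs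
  rw [← Real.log_pow]
  exact Real.log_le_log (by positivity) (by exact_mod_cast (Nat.lt_pow_succ_log_self hb n).le)

section Tree

variable {β : ℝ} {μ : Node → ℝ}

lemma wgt_nonneg (β : ℝ) (t : Node) : 0 ≤ wgt β t := by unfold wgt; positivity

lemma wgt_le_one (hβ : 0 ≤ β) (t : Node) : wgt β t ≤ 1 :=
  Real.rpow_le_one_of_one_le_of_nonpos (by simp) (by simpa using hβ)

/-- The finite set of nodes whose level belongs to `I`. -/
def levels (I : Finset ℕ) : Finset Node :=
  I.biUnion fun k => Finset.univ.map ⟨fun t : List.Vector Bool k => t.1, Subtype.val_injective⟩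

lemma mem_levels {I : Finset ℕ} {t : Node} : t ∈ levels I ↔ t.length ∈ I := by
  simp only [levels, Finset.mem_biUnion, Finset.mem_map, Finset.mem_univ, true_and]
  constructor
  · rintro ⟨k, hk, ⟨t, rfl⟩, rfl⟩
    exact hk
  · exact fun h => ⟨_, h, ⟨t, rfl⟩, rfl⟩

lemma coe_levels (I : Finset ℕ) : (levels I : Set Node) = List.length ⁻¹' I :=
  Set.ext fun _ => mem_levels

lemma card_levels_range_lt (D : ℕ) : (levels (.range D)).card < 2 ^ D :=
  calc (levels (.range D)).card ≤ ∑ k ∈ .range D, 2 ^ k := by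
        refine Finset.card_biUnion_le.trans_eq ?_
        simp
    _ < 2 ^ D := Nat.geomSum_lt le_rfl fun k hk => Finset.mem_range.1 hk

/-- The indicator function of the path from the root to `u`; it is the image under `V*` of the
unit mass at `u`. -/
noncomputable def pathIndicator (u : Node) : Node → ℝ := indicator {t | t <+: u} 1

lemma hasSum_smul_pathIndicator (hμ : MemL1 μ) :
    HasSum (fun u => μ u • pathIndicator u) (Vstar μ) := by
  refine Pi.hasSum.2 fun t => ?_
  have hterm : {u | t <+: u}.indicator μ = fun u => (μ u • pathIndicator u) t := by
    ext u
    by_cases h : t <+: u <;> simp [pathIndicator, h]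
  rw [← hterm]
  exact hasSum_subtype_iff_indicator.1 ((Summable.of_abs hμ).subtype _).hasSum

lemma abs_vstar_le_l1Norm (hμ : MemL1 μ) (t : Node) : |Vstar μ t| ≤ l1Norm μ := by
  have habs : Summable fun u => ‖μ u‖ := hμ
  calc |Vstar μ t| ≤ ∑' u : {u | t <+: u}, ‖μ u‖ := norm_tsum_le_tsum_norm (habs.subtype _)
    _ ≤ ∑' u, ‖μ u‖ := habs.tsum_subtype_le _ _ fun u => norm_nonneg (μ u)

lemma pathIndicator_take {D : ℕ} {t : Node} (ht : t.length ≤ D) (u : Node) :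
    pathIndicator (u.take D) t = pathIndicator u t := by
  simp only [pathIndicator, indicator_apply, mem_ofPred_eq, List.prefix_take_iff, ht, and_true]

lemma sum_wgt_mul_pathIndicator_sq_le (I : Finset ℕ) (u : Node) :
    ∑ t ∈ levels I, wgt β t * pathIndicator u t ^ 2 ≤ ∑ k ∈ I, ((1 : ℝ) + k) ^ (-β) := by
  classical
  have hinj : InjOn List.length ((levels I).filter (· <+: u) : Set Node) := fun s hs t ht hst => by
    rw [List.prefix_iff_eq_take.1 (Finset.mem_filter.1 hs).2,
      List.prefix_iff_eq_take.1 (Finset.mem_filter.1 ht).2, hst]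
  calc ∑ t ∈ levels I, wgt β t * pathIndicator u t ^ 2
      = ∑ t ∈ levels I with t <+: u, ((1 : ℝ) + t.length) ^ (-β) := by
        rw [Finset.sum_filter]
        refine Finset.sum_congr rfl fun t _ => ?_
        by_cases h : t <+: u <;> simp [pathIndicator, wgt, h]
    _ = ∑ k ∈ ((levels I).filter (· <+: u)).image List.length, ((1 : ℝ) + k) ^ (-β) :=
        (Finset.sum_image (f := fun k : ℕ => ((1 : ℝ) + k) ^ (-β)) hinj).symm
    _ ≤ ∑ k ∈ I, ((1 : ℝ) + k) ^ (-β) := by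
        refine Finset.sum_le_sum_of_subset_of_nonneg (fun k hk => ?_) fun k _ _ => by positivity
        obtain ⟨t, ht, rfl⟩ := Finset.mem_image.1 hk
        exact mem_levels.1 (Finset.mem_filter.1 ht).1

lemma weightedRestrict_vstar_mem_absConvexHull {w : Node → ℝ} {B : Finset Node} {D : ℕ}
    (hB : ∀ t ∈ B, t.length ≤ D) (hμ : MemL1 μ) (hμ₁ : l1Norm μ ≤ 1) :
    weightedRestrict w B (Vstar μ) ∈ absConvexHull ℝ
      (weightedRestrict w B '' (pathIndicator '' levels (.range (D + 1)))) := by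
  set P := weightedRestrict w B '' (pathIndicator '' levels (.range (D + 1)))
  have hclosed : IsClosed (absConvexHull ℝ P) := by
    have hfin : P.Finite := ((levels (.range (D + 1))).finite_toSet.image _).image _
    rw [← convexHull_union_neg_eq_absConvexHull]
    exact (hfin.union hfin.neg).isClosed_convexHull (𝕜 := ℝ)
  have hpath (u : Node) : weightedRestrict w B (pathIndicator u) ∈ absConvexHull ℝ P := by
    have hu : u.take D ∈ levels (.range (D + 1)) := by simp [mem_levels]
    refine subset_absConvexHull ⟨_, mem_image_of_mem _ hu, ?_⟩
    ext t
    rw [weightedRestrict_apply, weightedRestrict_apply, pathIndicator_take (hB t t.2)]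
  have hsum := (weightedRestrict w B).hasSum (hasSum_smul_pathIndicator hμ)
  simp only [map_smul] at hsum
  exact hasSum_smul_mem_of_absConvex absConvex_absConvexHull ⟨_, hpath []⟩ hclosed hpath hμ hμ₁ hsum

/-- The image of the unit ball of `ℓ₁(T)` under `V*`. -/
def vstarBall : Set (Node → ℝ) := Vstar '' {μ | MemL1 μ ∧ l1Norm μ ≤ 1}

lemma hasNet_levels_range (hβ : 0 ≤ β) (L p : ℕ) :
    HasNet (wgt β) vstarBall (levels (.range L)) (p * 2 ^ L) (.ofReal (2 ^ L / 4 ^ p)) := by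
  have hcard := (card_levels_range_lt L).le
  have hF : ∀ f ∈ vstarBall, ∀ t ∈ levels (.range L), |f t| ≤ 1 := by
    rintro _ ⟨μ, ⟨hμ, hμ₁⟩, rfl⟩ t -
    exact (abs_vstar_le_l1Norm hμ t).trans hμ₁
  refine (hasNet_coe_of_abs_le_one (fun t _ => wgt_le_one hβ t) hF p).mono (by gcongr) ?_
  gcongr
  exact_mod_cast hcard

lemma sum_Ico_two_mul_rpow_neg_le (hβ : 0 ≤ β) {a : ℕ} (ha : 0 < a) :
    ∑ k ∈ .Ico a (2 * a), ((1 : ℝ) + k) ^ (-β) ≤ (a : ℝ) ^ (1 - β) := by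
  have ha' : (0 : ℝ) < a := by exact_mod_cast ha
  calc ∑ k ∈ .Ico a (2 * a), ((1 : ℝ) + k) ^ (-β)
      ≤ ∑ _k ∈ .Ico a (2 * a), (a : ℝ) ^ (-β) := by
        refine Finset.sum_le_sum fun k hk => ?_
        have hak : (a : ℝ) ≤ k := by exact_mod_cast (Finset.mem_Ico.1 hk).1
        exact Real.rpow_le_rpow_of_nonpos ha' (by linarith) (by linarith)
    _ = a * (a : ℝ) ^ (-β) := by
        rw [Finset.sum_const, Nat.card_Ico, nsmul_eq_mul, two_mul, Nat.add_sub_cancel]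
    _ = (a : ℝ) ^ (1 - β) := by rw [sub_eq_add_neg, Real.rpow_add ha', Real.rpow_one]

lemma hasNet_levels_Ico_two_mul (hβ : 0 ≤ β) {a : ℕ} (ha : 0 < a) (m : ℕ) :
    HasNet (wgt β) vstarBall (levels (.Ico a (2 * a))) (m * (4 * a))
      (.ofReal ((a : ℝ) ^ (1 - β) / (m + 1))) := by
  classical
  have hV : ((levels (.range (2 * a + 1))).image pathIndicator).card ≤ 2 ^ (2 * a + 1) :=
    Finset.card_image_le.trans (card_levels_range_lt _).le
  have hVr : ∀ v ∈ (levels (.range (2 * a + 1))).image pathIndicator,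
      ∑ t ∈ levels (.Ico a (2 * a)), wgt β t * v t ^ 2 ≤ (a : ℝ) ^ (1 - β) := by
    refine Finset.forall_mem_image.2 fun u _ => ?_
    exact (sum_wgt_mul_pathIndicator_sq_le _ u).trans (sum_Ico_two_mul_rpow_neg_le hβ ha)
  have hlen : ∀ t ∈ levels (.Ico a (2 * a)), t.length ≤ 2 * a := fun t ht =>
    (Finset.mem_Ico.1 (mem_levels.1 ht)).2.le
  refine (hasNet_coe_of_mem_absConvexHull (fun t _ => wgt_nonneg β t) hV hVr ?_ m).mono ?_ le_rfl
  · rintro _ ⟨μ, ⟨hμ, hμ₁⟩, rfl⟩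
    rw [Finset.coe_image]
    exact weightedRestrict_vstar_mem_absConvexHull hlen hμ hμ₁
  · gcongr
    omega

lemma exists_hasNet_preimage_length_Ici (hβ : 2 < β) :
    ∃ C, 0 < C ∧ ∀ L k : ℕ, 0 < L → 0 < k →
      HasNet (wgt β) vstarBall (List.length ⁻¹' Ici L) k (.ofReal (C * L ^ (2 - β) / k)) := by
  -- `ρ ^ j` is the square root of the decay of the block errors: with a share `ρ ^ j` of the bits,
  -- the error of the `j`-th block still decays like `ρ ^ j`.
  set ρ : ℝ := √(2 ^ (2 - β))
  have hρβ : ρ ^ 2 = 2 ^ (2 - β) := Real.sq_sqrt (by positivity)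
  have hρ₀ : 0 < ρ := by positivity
  have hρ₁ : ρ < 1 := by
    rw [← sq_lt_one_iff₀ hρ₀.le, hρβ]
    exact Real.rpow_lt_one_of_one_lt_of_neg one_lt_two (by linarith)
  have hρ₂ : 0 < 1 - ρ := sub_pos.2 hρ₁
  refine ⟨4 / (1 - ρ) ^ 2, by positivity, fun L k hL hk => ?_⟩
  obtain ⟨m, s, hms, hbits, hm⟩ := exists_geometric_allocation hρ₀.le hρ₁
    (c := fun j => 4 * (2 ^ j * L)) (fun j => by positivity) k
  have hblock (j : ℕ) : HasNet (wgt β) vstarBall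
      (List.length ⁻¹' Ico (2 ^ j * L) (2 ^ (j + 1) * L)) (m j * (4 * (2 ^ j * L)))
      (.ofReal (4 * (L : ℝ) ^ (2 - β) / ((1 - ρ) * k) * ρ ^ j)) := by
    rw [pow_succ', mul_assoc, ← Finset.coe_Ico, ← coe_levels]
    exact (hasNet_levels_Ico_two_mul (by linarith) (by positivity) (m j)).mono le_rfl <|
      ENNReal.ofReal_le_ofReal <| rpow_one_sub_div_le hρ₀ hρ₁ hρβ hL hk (hm j)
  have hsum : HasSum (fun j => 4 * (L : ℝ) ^ (2 - β) / ((1 - ρ) * k) * ρ ^ j)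
      (4 / (1 - ρ) ^ 2 * L ^ (2 - β) / k) := by
    have hC : 4 * (L : ℝ) ^ (2 - β) / ((1 - ρ) * k) * (1 - ρ)⁻¹ =
        4 / (1 - ρ) ^ 2 * L ^ (2 - β) / k := by field_simp
    rw [← hC]
    exact (hasSum_geometric_of_lt_one hρ₀.le hρ₁).mul_left _
  have hdisj : Pairwise (Disjoint on fun j => List.length (α := Bool) ⁻¹'
      Ico (2 ^ j * L) (2 ^ (j + 1) * L)) := fun i j hij =>
    (pairwise_disjoint_Ico_two_pow_mul L hij).preimage _
  have := HasNet.iUnion hdisj hblock (s := s) fun j hj => by simp [hms j hj]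
  rw [← preimage_iUnion, iUnion_Ico_two_pow_mul hL,
    ← ENNReal.ofReal_tsum_of_nonneg (fun j => by positivity) hsum.summable, hsum.tsum_eq] at this
  exact this.mono hbits le_rfl

lemma exists_hasNet_univ (hβ : 2 < β) :
    ∃ C, 0 < C ∧ ∀ L p k : ℕ, 0 < L → 0 < k → HasNet (wgt β) vstarBall univ (p * 2 ^ L + k)
      (.ofReal (2 ^ L / 4 ^ p + C * L ^ (2 - β) / k)) := by
  obtain ⟨C, hC, htail⟩ := exists_hasNet_preimage_length_Ici hβ
  refine ⟨C, hC, fun L p k hL hk => ?_⟩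
  have hlow := hasNet_levels_range (β := β) (by linarith) L p
  rw [coe_levels, Finset.coe_range] at hlow
  have hdisj : Disjoint (List.length (α := Bool) ⁻¹' Iio L) (List.length ⁻¹' Ici L) :=
    (Iio_disjoint_Ici le_rfl).preimage _
  have := hlow.union hdisj (htail L k hL hk)
  rwa [← preimage_union, Iio_union_Ici, preimage_univ,
    ← ENNReal.ofReal_add (by positivity) (by positivity)] at this

theorem exists_hasNet_univ_sub_one (hβ : 2 < β) :
    ∃ A, 0 < A ∧ ∀ n : ℕ, 2 ≤ n →
      HasNet (wgt β) vstarBall univ (n - 1) (.ofReal (A * Real.log n ^ (2 - β) / n)) := by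
  obtain ⟨C, hC, hnet⟩ := exists_hasNet_univ hβ
  obtain ⟨D, hD, hpow⟩ := exists_inv_two_pow_le_mul_rpow (2 - β)
  have hlog64 : 0 < Real.log 64 := Real.log_pos (by norm_num)
  refine ⟨(256 * D + 3 * C) / Real.log 64 ^ (2 - β), by positivity, fun n hn => ?_⟩
  set L := Nat.log 64 n + 1
  have hthird : (n : ℝ) / 3 ≤ (n / 2 : ℕ) := by
    rw [div_le_iff₀ three_pos]
    exact_mod_cast (by omega : n ≤ n / 2 * 3)
  have hlog : (L : ℝ) ^ (2 - β) ≤ (Real.log n / Real.log 64) ^ (2 - β) :=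
    natLog_add_one_rpow_le (b := 64) (by linarith) (by norm_num) hn
  have hlow : (2 : ℝ) ^ L / 4 ^ (4 * Nat.log 64 n) ≤ 256 * (D * L ^ (2 - β)) / n :=
    (two_pow_log_div_four_pow_log_le (by omega)).trans (by gcongr; exact hpow L (Nat.succ_pos _))
  refine (hnet L (4 * Nat.log 64 n) (n / 2) (Nat.succ_pos _) (by omega)).mono
    (four_mul_log_mul_two_pow_add_half_le hn) (ENNReal.ofReal_le_ofReal ?_)
  calc (2 : ℝ) ^ L / 4 ^ (4 * Nat.log 64 n) + C * L ^ (2 - β) / (n / 2 : ℕ)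
      ≤ 256 * (D * L ^ (2 - β)) / n + C * L ^ (2 - β) / (n / 3) :=
        add_le_add hlow (by gcongr)
    _ = (256 * D + 3 * C) * L ^ (2 - β) / n := by field_simp
    _ ≤ (256 * D + 3 * C) * (Real.log n / Real.log 64) ^ (2 - β) / n := by gcongr
    _ = (256 * D + 3 * C) / Real.log 64 ^ (2 - β) * Real.log n ^ (2 - β) / n := by
        rw [Real.div_rpow (Real.log_natCast_nonneg n) hlog64.le]
        ring

end Tree

/-- Upper bound `e_n(V*) ≤ C₂ (ln n)^{1-β/2} n^{-1/2}` for `β > 2`: for every radius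
`ε` exceeding the bound, the image of the unit ball of `ℓ₁(T)` under `V*` can be
covered by `2^{n-1}` balls of radius `ε` in `ℓ₂(T,W)`. -/
theorem entropy_upper_bound_regular_large_beta (β : ℝ) (hβ : 2 < β) :
    ∃ C : ℝ, 0 < C ∧ ∀ n : ℕ, 2 ≤ n →
      ∀ ε : ℝ, C * Real.log n ^ (1 - β / 2) * (n : ℝ) ^ (-(1 : ℝ) / 2) < ε →
        ∃ N : Finset (Node → ℝ), N.card ≤ 2 ^ (n - 1) ∧
          ∀ μ : Node → ℝ, MemL1 μ → l1Norm μ ≤ 1 →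
            ∃ g ∈ N, distSqW β (Vstar μ) g ≤ ENNReal.ofReal (ε ^ 2) := by
  obtain ⟨A, hA, hnet⟩ := exists_hasNet_univ_sub_one hβ
  refine ⟨√A, Real.sqrt_pos.2 hA, fun n hn ε hε => ?_⟩
  have hlog : 0 ≤ Real.log n := Real.log_natCast_nonneg n
  have hsq : (√A * Real.log n ^ (1 - β / 2) * (n : ℝ) ^ (-(1 : ℝ) / 2)) ^ 2 =
      A * Real.log n ^ (2 - β) / n := by
    rw [mul_pow, mul_pow, Real.sq_sqrt hA.le, ← Real.rpow_mul_natCast hlog,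
      ← Real.rpow_mul_natCast n.cast_nonneg, Nat.cast_two, show (1 - β / 2) * 2 = 2 - β by ring,
      div_mul_cancel₀ _ two_ne_zero, Real.rpow_neg_one, div_eq_mul_inv]
  obtain ⟨N, hN, hcover⟩ := hnet n hn
  refine ⟨N, hN, fun μ hμ hμ₁ => ?_⟩
  obtain ⟨g, hg, hdist⟩ := hcover _ ⟨μ, ⟨hμ, hμ₁⟩, rfl⟩
  refine ⟨g, hg, ?_⟩
  calc distSqW β (Vstar μ) g = distSqOn (wgt β) univ (Vstar μ) g := (tsum_univ _).symm
    _ ≤ .ofReal (A * Real.log n ^ (2 - β) / n) := hdist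
    _ ≤ .ofReal (ε ^ 2) := by
        rw [← hsq]
        gcongr
end

section
/- Let T be the infinite binary tree with the critical weight w(t) = (1+|t|)^{-2}, and let V : ℓ₂(T,W) → ℓ∞(T) be the operator (Vf)(t) = Σ_{u ⪯ t} w(u) f(u), where the sum is over the nodes u on the branch from the root to t (u a prefix of t, including u = t). Then there exists a numerical constant C such that for all positive integers n, e_n(V) ≤ C · n^{-1/2}. -/
open scoped ENNReal

/-- The tree summation operator `(Vf)(t) = Σ_{u ⪯ t} w(u) f(u)`, where the sum runs
over the (finitely many) prefixes `u = t.take l`, `l = 0, …, |t|`, of `t`. -/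
noncomputable def Vop (w : Node → ℝ) (f : Node → ℝ) (t : Node) : ℝ :=
  ∑ l ∈ Finset.range (t.length + 1), w (t.take l) * f (t.take l)

/-!
By the Cauchy-Schwarz inequality, a path starting at level `k` on which `Vf` varies by more than
`δ` carries energy at least `δ² (k + 1) / K`, since the weight of such a path is at most
`K / (k + 1)`. Working from the deepest level up, mark a node as an anchor when `Vf` varies by
more than `δ` along some path going down from it that meets no other anchor. These paths are
disjoint, so the unit ball constraint gives `∑ (level + 1) ≤ K / δ²` over the anchors. The anchors
together with the values of `Vf` at them, rounded to multiples of `δ`, determine `Vf` up to `3 δ`.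
For `δ² = K / m` an anchor at level `k` costs `k + 1` out of a budget of `m`, and since there are
only `2 ^ k` nodes on level `k`, weighting each unit of cost by `1 / 4` bounds the number of codes
by `2 ^ (4 m + 1)`. Two functions with the same code are close, so one representative for each code
suffices and no decoder is needed.
-/

section Branch

variable {α : Type*} [DecidableEq α]

/-- The part of the branch from the root to `t` that starts at level `k`:
the prefixes of `t` of length at least `k`. -/
def branchFrom (k : ℕ) (t : List α) : Finset (List α) := {u ∈ t.inits.toFinset | k ≤ u.length}

lemma mem_branchFrom {k : ℕ} {t u : List α} : u ∈ branchFrom k t ↔ u <+: t ∧ k ≤ u.length := by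
  simp [branchFrom]

lemma sum_branchFrom {M : Type*} [AddCommMonoid M] (φ : List α → M) (k : ℕ) (t : List α) :
    ∑ u ∈ branchFrom k t, φ u = ∑ l ∈ Finset.Ico k (t.length + 1), φ (t.take l) := by
  refine Finset.sum_nbij' List.length t.take ?_ ?_ ?_ ?_ ?_
  · intro u hu
    rw [mem_branchFrom] at hu
    exact Finset.mem_Ico.2 ⟨hu.2, Nat.lt_succ_of_le hu.1.length_le⟩
  · intro l hl
    rw [Finset.mem_Ico] at hl
    exact mem_branchFrom.2 ⟨t.take_prefix l, by rw [List.length_take]; omega⟩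
  · exact fun u hu => (List.prefix_iff_eq_take.1 (mem_branchFrom.1 hu).1).symm
  · intro l hl
    rw [Finset.mem_Ico] at hl
    rw [List.length_take]
    omega
  · exact fun u hu => congrArg φ (List.prefix_iff_eq_take.1 (mem_branchFrom.1 hu).1)

lemma sum_branchFrom_zero_add {M : Type*} [AddCommMonoid M] (φ : List α → M) {s t : List α}
    (hst : s <+: t) :
    ∑ u ∈ branchFrom 0 s, φ u + ∑ u ∈ branchFrom (s.length + 1) t, φ u =
      ∑ u ∈ branchFrom 0 t, φ u := by
  have take_eq : ∀ l ∈ Finset.Ico 0 (s.length + 1), φ (s.take l) = φ (t.take l) := by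
    intro l hl
    rw [List.prefix_iff_eq_take.1 hst, List.take_take, min_eq_left]
    exact Nat.lt_succ_iff.1 (Finset.mem_Ico.1 hl).2
  simp only [sum_branchFrom]
  rw [Finset.sum_congr rfl take_eq]
  exact Finset.sum_Ico_consecutive _ (Nat.zero_le _) (Nat.succ_le_succ hst.length_le)

lemma exists_last_prefix (p : List α → Prop) (t : List α) :
    (∀ u ∈ branchFrom 0 t, ¬ p u) ∨
      ∃ s, s <+: t ∧ p s ∧ ∀ u ∈ branchFrom (s.length + 1) t, ¬ p u := by
  classical
  rcases Finset.eq_empty_or_nonempty {u ∈ branchFrom 0 t | p u} with hempty | hne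
  · exact Or.inl fun u hu => Finset.filter_eq_empty_iff.1 hempty hu
  · obtain ⟨s, hs, hmax⟩ := Finset.exists_max_image _ List.length hne
    simp only [Finset.mem_filter, mem_branchFrom] at hs hmax
    refine Or.inr ⟨s, hs.1.1, hs.2, fun u hu hpu => ?_⟩
    rw [mem_branchFrom] at hu
    have := hmax u ⟨⟨hu.1, Nat.zero_le _⟩, hpu⟩
    omega

end Branch

section Anchor

variable {α : Type*} [DecidableEq α] {a : List α → ℝ} {δ : ℝ} {Λ : ℕ} {s t : List α}

/-- The nodes `s`, of level less than `Λ`, at which the value of the path sum of `a` has to be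
recorded in order to know all path sums up to `δ`. They are chosen from the deepest level up:
`s` is an anchor when some node `t` below `s` is not protected by an anchor strictly between
`s` and `t` although the sum of `a` over the path from `s` to `t` exceeds `δ` in absolute value.
The bound `Λ` makes the recursion well founded. -/
def IsAnchor (a : List α → ℝ) (δ : ℝ) (Λ : ℕ) (s : List α) : Prop :=
  ∃ _ : s.length < Λ, ∃ t, s <+: t ∧ δ < |∑ u ∈ branchFrom s.length t, a u| ∧
    ∀ u, (_ : u ∈ branchFrom (s.length + 1) t) → ¬ IsAnchor a δ Λ u
termination_by Λ - s.length
decreasing_by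
  rename_i hs _ hu
  have := (mem_branchFrom.1 hu).2
  omega

lemma isAnchor_iff :
    IsAnchor a δ Λ s ↔ s.length < Λ ∧ ∃ t, s <+: t ∧ δ < |∑ u ∈ branchFrom s.length t, a u| ∧
      ∀ u ∈ branchFrom (s.length + 1) t, ¬ IsAnchor a δ Λ u := by
  rw [IsAnchor, exists_prop]

lemma abs_sum_branchFrom_le_of_not_isAnchor {k : ℕ} (hδ : 0 ≤ δ)
    (htail : ∀ k, Λ ≤ k → ∀ t, |∑ u ∈ branchFrom k t, a u| ≤ δ)
    (hnot : ∀ u ∈ branchFrom k t, ¬ IsAnchor a δ Λ u) :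
    |∑ u ∈ branchFrom k t, a u| ≤ δ := by
  rcases le_or_gt Λ k with hΛ | hΛ
  · exact htail k hΛ t
  rcases lt_or_ge t.length k with ht | ht
  · simpa [sum_branchFrom, Finset.Ico_eq_empty_of_le (Nat.succ_le_of_lt ht)] using hδ
  have hlen : (t.take k).length = k := by simpa using ht
  have hroot : ¬ IsAnchor a δ Λ (t.take k) :=
    hnot _ (mem_branchFrom.2 ⟨t.take_prefix k, hlen.ge⟩)
  by_contra! hfar
  refine hroot (isAnchor_iff.2 ⟨hlen.trans_lt hΛ, t, t.take_prefix k, by rwa [hlen], ?_⟩)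
  intro u hu
  rw [mem_branchFrom, hlen] at hu
  exact hnot u (mem_branchFrom.2 ⟨hu.1, by omega⟩)

lemma disjoint_branchFrom {p : List α → Prop} {s' t' : List α} (hne : s ≠ s')
    (hp : p s) (hp' : p s') (hst : s <+: t) (hst' : s' <+: t')
    (ht : ∀ u ∈ branchFrom (s.length + 1) t, ¬ p u)
    (ht' : ∀ u ∈ branchFrom (s'.length + 1) t', ¬ p u) :
    Disjoint (branchFrom s.length t) (branchFrom s'.length t') := by
  wlog hle : s.length ≤ s'.length generalizing s s' t t'
  · exact (this hne.symm hp' hp hst' hst ht' ht (le_of_not_ge hle)).symm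
  rw [Finset.disjoint_left]
  intro u hu hu'
  rw [mem_branchFrom] at hu hu'
  have hs'u : s' <+: u := List.prefix_of_prefix_length_le hst' hu'.1 hu'.2
  have hss' : s <+: s' := List.prefix_of_prefix_length_le hst (hs'u.trans hu.1) hle
  have hlt : s.length < s'.length := hle.lt_of_ne fun h => hne (hss'.eq_of_length h)
  exact ht s' (mem_branchFrom.2 ⟨hs'u.trans hu.1, hlt⟩) hp'

variable [Finite α]

/-- The finitely many anchors, collected in a `Finset`. -/
noncomputable def anchors (a : List α → ℝ) (δ : ℝ) (Λ : ℕ) : Finset (List α) :=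
  open Classical in {s ∈ (List.finite_length_lt α Λ).toFinset | IsAnchor a δ Λ s}

lemma mem_anchors : s ∈ anchors a δ Λ ↔ IsAnchor a δ Λ s := by
  simp only [anchors, Finset.mem_filter, Set.Finite.mem_toFinset, Set.mem_ofPred_eq,
    and_iff_right_iff_imp]
  exact fun h => (isAnchor_iff.1 h).1

/-- The code of `a`: every anchor together with the path sum of `a` at it, rounded down to a
multiple of `δ`. -/
noncomputable def anchorCode (a : List α → ℝ) (δ : ℝ) (Λ : ℕ) : Finset (List α × ℤ) :=
  (anchors a δ Λ).image fun s => (s, ⌊(∑ u ∈ branchFrom 0 s, a u) / δ⌋)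

lemma isAnchor_of_anchorCode_eq {a' : List α → ℝ} (hcode : anchorCode a δ Λ = anchorCode a' δ Λ)
    (hs : IsAnchor a δ Λ s) :
    IsAnchor a' δ Λ s ∧
      ⌊(∑ u ∈ branchFrom 0 s, a u) / δ⌋ = ⌊(∑ u ∈ branchFrom 0 s, a' u) / δ⌋ := by
  have hmem : (s, ⌊(∑ u ∈ branchFrom 0 s, a u) / δ⌋) ∈ anchorCode a' δ Λ :=
    hcode ▸ Finset.mem_image_of_mem _ (mem_anchors.2 hs)
  obtain ⟨s', hs', heq⟩ := Finset.mem_image.1 hmem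
  obtain ⟨rfl, hfloor⟩ := Prod.mk.inj heq
  exact ⟨mem_anchors.1 hs', hfloor.symm⟩

theorem abs_sum_sub_sum_le_of_anchorCode_eq {a' : List α → ℝ} (hδ : 0 < δ)
    (htail : ∀ k, Λ ≤ k → ∀ t, |∑ u ∈ branchFrom k t, a u| ≤ δ)
    (htail' : ∀ k, Λ ≤ k → ∀ t, |∑ u ∈ branchFrom k t, a' u| ≤ δ)
    (hcode : anchorCode a δ Λ = anchorCode a' δ Λ) (t : List α) :
    |∑ u ∈ branchFrom 0 t, a u - ∑ u ∈ branchFrom 0 t, a' u| ≤ 3 * δ := by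
  have hiff : ∀ u, IsAnchor a δ Λ u ↔ IsAnchor a' δ Λ u := fun u =>
    ⟨fun h => (isAnchor_of_anchorCode_eq hcode h).1,
      fun h => (isAnchor_of_anchorCode_eq hcode.symm h).1⟩
  rcases exists_last_prefix (IsAnchor a δ Λ) t with hnone | ⟨s, hst, hs, hlast⟩
  · have h := abs_sum_branchFrom_le_of_not_isAnchor hδ.le htail hnone
    have h' := abs_sum_branchFrom_le_of_not_isAnchor hδ.le htail'
      fun u hu => (hiff u).not.1 (hnone u hu)
    rw [abs_le] at h h' ⊢
    constructor <;> linarith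
  · have hbelow := abs_sum_branchFrom_le_of_not_isAnchor hδ.le htail hlast
    have hbelow' := abs_sum_branchFrom_le_of_not_isAnchor hδ.le htail'
      fun u hu => (hiff u).not.1 (hlast u hu)
    have hround : |∑ u ∈ branchFrom 0 s, a u - ∑ u ∈ branchFrom 0 s, a' u| < δ := by
      have := Int.abs_sub_lt_one_of_floor_eq_floor (isAnchor_of_anchorCode_eq hcode hs).2
      rwa [← sub_div, abs_div, abs_of_pos hδ, div_lt_one hδ] at this
    rw [← sum_branchFrom_zero_add a hst, ← sum_branchFrom_zero_add a' hst]
    rw [abs_le] at hbelow hbelow' ⊢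
    rw [abs_lt] at hround
    constructor <;> linarith

end Anchor

section Energy

variable {α : Type*} [DecidableEq α] {w f : List α → ℝ} {K δ : ℝ} {Λ : ℕ}

lemma sq_sum_branchFrom_le (hw : ∀ t, 0 ≤ w t)
    (hK : ∀ k t, ∑ u ∈ branchFrom k t, w u ≤ K / (k + 1)) (k : ℕ) (t : List α) :
    (∑ u ∈ branchFrom k t, w u * f u) ^ 2 ≤
      K / (k + 1) * ∑ u ∈ branchFrom k t, w u * f u ^ 2 := by
  have hnonneg : ∀ u, 0 ≤ w u * f u ^ 2 := fun u => mul_nonneg (hw u) (sq_nonneg _)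
  calc (∑ u ∈ branchFrom k t, w u * f u) ^ 2
      ≤ (∑ u ∈ branchFrom k t, w u) * ∑ u ∈ branchFrom k t, w u * f u ^ 2 :=
        Finset.sum_sq_le_sum_mul_sum_of_sq_le_mul _ (fun u _ => hw u) (fun u _ => hnonneg u)
          fun u _ => le_of_eq (by ring)
    _ ≤ K / (k + 1) * ∑ u ∈ branchFrom k t, w u * f u ^ 2 :=
        mul_le_mul_of_nonneg_right (hK k t) (Finset.sum_nonneg fun u _ => hnonneg u)

lemma sq_sum_branchFrom_le_of_sum_le_one (hw : ∀ t, 0 ≤ w t)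
    (hK : ∀ k t, ∑ u ∈ branchFrom k t, w u ≤ K / (k + 1))
    (hf : ∀ P : Finset (List α), ∑ u ∈ P, w u * f u ^ 2 ≤ 1) (k : ℕ) (t : List α) :
    (∑ u ∈ branchFrom k t, w u * f u) ^ 2 ≤ K / (k + 1) :=
  (sq_sum_branchFrom_le hw hK k t).trans <| mul_le_of_le_one_right
    ((Finset.sum_nonneg fun u _ => hw u).trans (hK k t)) (hf _)

theorem sq_mul_sum_anchors_le [Finite α] (hδ : 0 ≤ δ) (hw : ∀ t, 0 ≤ w t)
    (hK : ∀ k t, ∑ u ∈ branchFrom k t, w u ≤ K / (k + 1))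
    (hf : ∀ P : Finset (List α), ∑ u ∈ P, w u * f u ^ 2 ≤ 1) :
    δ ^ 2 * ∑ s ∈ anchors (w * f) δ Λ, ((s.length : ℝ) + 1) ≤ K := by
  have hK0 : 0 ≤ K := by
    simpa using (Finset.sum_nonneg fun u _ => hw u).trans (hK 0 [])
  have hwitness : ∀ s ∈ anchors (w * f) δ Λ, ∃ t, s <+: t ∧
      δ < |∑ u ∈ branchFrom s.length t, w u * f u| ∧
      ∀ u ∈ branchFrom (s.length + 1) t, ¬ IsAnchor (w * f) δ Λ u :=
    fun s hs => (isAnchor_iff.1 (mem_anchors.1 hs)).2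
  choose! bottom hprefix hfar hfree using hwitness
  have hdisj : (anchors (w * f) δ Λ : Set (List α)).PairwiseDisjoint
      fun s => branchFrom s.length (bottom s) := fun s hs s' hs' hne =>
    disjoint_branchFrom hne (mem_anchors.1 hs) (mem_anchors.1 hs') (hprefix s hs) (hprefix s' hs')
      (hfree s hs) (hfree s' hs')
  have hcost : ∀ s ∈ anchors (w * f) δ Λ, δ ^ 2 * ((s.length : ℝ) + 1) ≤
      K * ∑ u ∈ branchFrom s.length (bottom s), w u * f u ^ 2 := by
    intro s hs
    have hlt : δ ^ 2 ≤ (∑ u ∈ branchFrom s.length (bottom s), w u * f u) ^ 2 :=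
      sq_le_sq.2 ((abs_of_nonneg hδ).trans_le (hfar s hs).le)
    have := hlt.trans (sq_sum_branchFrom_le hw hK _ _)
    rwa [div_mul_eq_mul_div, le_div_iff₀ (by positivity)] at this
  calc δ ^ 2 * ∑ s ∈ anchors (w * f) δ Λ, ((s.length : ℝ) + 1)
      ≤ ∑ s ∈ anchors (w * f) δ Λ, K * ∑ u ∈ branchFrom s.length (bottom s), w u * f u ^ 2 := by
        rw [Finset.mul_sum]
        exact Finset.sum_le_sum hcost
    _ = K * ∑ u ∈ (anchors (w * f) δ Λ).biUnion fun s => branchFrom s.length (bottom s),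
          w u * f u ^ 2 := by
        rw [← Finset.mul_sum, Finset.sum_biUnion hdisj]
    _ ≤ K := mul_le_of_le_one_right hK0 (hf _)

end Energy

section Counting

theorem card_filter_powerset_sum_le {ι : Type*} (U : Finset ι) (c : ι → ℕ) (b : ℕ) {q : ℝ}
    (hq : 1 ≤ q) :
    (({S ∈ U.powerset | ∑ x ∈ S, c x ≤ b} : Finset (Finset ι)).card : ℝ) ≤
      q ^ b * Real.exp (∑ x ∈ U, q⁻¹ ^ c x) := by
  have : 0 < q := zero_lt_one.trans_le hq
  rw [← inv_mul_le_iff₀ (by positivity), mul_comm, ← inv_pow]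
  calc (({S ∈ U.powerset | ∑ x ∈ S, c x ≤ b} : Finset (Finset ι)).card : ℝ) * q⁻¹ ^ b
      ≤ ∑ S ∈ U.powerset with ∑ x ∈ S, c x ≤ b, ∏ x ∈ S, q⁻¹ ^ c x := by
        rw [← nsmul_eq_mul]
        refine Finset.card_nsmul_le_sum _ _ _ fun S hS => ?_
        rw [Finset.prod_pow_eq_pow_sum]
        exact pow_le_pow_of_le_one (by positivity) (inv_le_one_of_one_le₀ hq)
          (Finset.mem_filter.1 hS).2
    _ ≤ ∑ S ∈ U.powerset, ∏ x ∈ S, q⁻¹ ^ c x :=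
        Finset.sum_le_sum_of_subset_of_nonneg (Finset.filter_subset _ _)
          fun S _ _ => by positivity
    _ = ∏ x ∈ U, (1 + q⁻¹ ^ c x) := (Finset.prod_one_add U).symm
    _ ≤ Real.exp (∑ x ∈ U, q⁻¹ ^ c x) := Real.prod_one_add_le_exp_sum U fun x => by positivity

lemma sum_length_lt {α M : Type*} [Fintype α] [AddCommMonoid M] (φ : ℕ → M) (n : ℕ) :
    ∑ s ∈ (List.finite_length_lt α n).toFinset, φ s.length =
      ∑ k ∈ Finset.range n, Fintype.card α ^ k • φ k := by
  rw [← Finset.sum_fiberwise_of_maps_to' (g := List.length) (t := Finset.range n) (by simp)]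
  refine Finset.sum_congr rfl fun k hk => ?_
  rw [Finset.sum_const, ← card_vector k]
  congr 1
  let _ : Fintype {s : List α // s.length = k} := inferInstanceAs (Fintype (List.Vector α k))
  refine (Fintype.card_of_subtype _ fun s => ?_).symm
  have : s.length = k → s.length < n := fun h => h ▸ Finset.mem_range.1 hk
  simpa

lemma sum_length_lt_inv_four_pow_le (n : ℕ) :
    ∑ s ∈ (List.finite_length_lt Bool n).toFinset, (4 : ℝ)⁻¹ ^ (s.length + 1) ≤ 1 / 2 := by
  have hterm : ∀ k : ℕ, Fintype.card Bool ^ k • (4 : ℝ)⁻¹ ^ (k + 1) = 1 / 4 * (1 / 2) ^ k := by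
    intro k
    rw [nsmul_eq_mul, Fintype.card_bool, Nat.cast_pow, Nat.cast_ofNat, pow_succ, ← mul_assoc,
      ← mul_pow]
    norm_num [mul_comm]
  rw [sum_length_lt (fun k => (4 : ℝ)⁻¹ ^ (k + 1))]
  simp only [hterm, ← Finset.mul_sum]
  linarith [sum_geometric_two_le n]

/-- The finite set of codes available for budget `m`: sets of nodes of level less than `m`
labelled by integers in `[-m, m]`, a node of level `k` costing `k + 1`. -/
noncomputable def budgetCodes (m : ℕ) : Finset (Finset (Node × ℤ)) :=
  {S ∈ ((List.finite_length_lt Bool m).toFinset ×ˢ Finset.Icc (-m : ℤ) m).powerset |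
    ∑ x ∈ S, (x.1.length + 1) ≤ m}

lemma card_budgetCodes_le (m : ℕ) : (budgetCodes m).card ≤ 2 ^ (4 * m + 1) := by
  have hsum : ∑ x ∈ (List.finite_length_lt Bool m).toFinset ×ˢ Finset.Icc (-m : ℤ) m,
      (4 : ℝ)⁻¹ ^ (x.1.length + 1) ≤ (2 * m + 1 : ℕ) * Real.log 2 := by
    have hcard : (Finset.Icc (-m : ℤ) m).card = 2 * m + 1 := by
      rw [Int.card_Icc]
      omega
    rw [Finset.sum_product]
    simp only [Finset.sum_const, hcard, nsmul_eq_mul, ← Finset.mul_sum]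
    refine mul_le_mul_of_nonneg_left ?_ (Nat.cast_nonneg _)
    linarith [sum_length_lt_inv_four_pow_le m, Real.log_two_gt_d9]
  suffices ((budgetCodes m).card : ℝ) ≤ 2 ^ (4 * m + 1) by exact_mod_cast this
  calc ((budgetCodes m).card : ℝ)
      ≤ 4 ^ m * Real.exp (∑ x ∈ (List.finite_length_lt Bool m).toFinset ×ˢ Finset.Icc (-m : ℤ) m,
          (4 : ℝ)⁻¹ ^ (x.1.length + 1)) :=
        card_filter_powerset_sum_le _ _ m (by norm_num)
    _ ≤ 4 ^ m * Real.exp ((2 * m + 1 : ℕ) * Real.log 2) := by gcongr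
    _ = 2 ^ (4 * m + 1) := by
        rw [Real.exp_nat_mul, Real.exp_log two_pos, show (4 : ℝ) = 2 ^ 2 by norm_num, ← pow_mul,
          ← pow_add]
        congr 1
        ring

lemma exists_finset_representatives {X Y : Type*} {A : Set X} {code : X → Y} {𝒞 : Finset Y}
    (hcode : ∀ x ∈ A, code x ∈ 𝒞) :
    ∃ R : Finset X, R.card ≤ 𝒞.card ∧ (∀ r ∈ R, r ∈ A) ∧
      ∀ x ∈ A, ∃ r ∈ R, code r = code x := by
  classical
  obtain ⟨R, hRA, hbij⟩ := Set.exists_subset_bijOn A code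
  have hmaps : Set.MapsTo code R 𝒞 := fun r hr => hcode r (hRA hr)
  have hfin : R.Finite := Set.Finite.of_finite_image
    (𝒞.finite_toSet.subset hmaps.image_subset) hbij.injOn
  refine ⟨hfin.toFinset, ?_, fun r hr => hRA (hfin.mem_toFinset.1 hr), fun x hx => ?_⟩
  · exact Finset.card_le_card_of_injOn code (by simpa using hmaps) (by simpa using hbij.injOn)
  · obtain ⟨r, hr, hrx⟩ := hbij.surjOn (Set.mem_image_of_mem code hx)
    exact ⟨r, hfin.mem_toFinset.2 hr, hrx⟩

end Counting

section Operator

lemma Vop_eq_sum_branchFrom (w f : Node → ℝ) (t : Node) :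
    Vop w f t = ∑ u ∈ branchFrom 0 t, w u * f u := by
  rw [sum_branchFrom, ← Finset.range_eq_Ico, Vop]

lemma sum_mul_sq_le_one_of_tsum_le_one {w f : Node → ℝ} (hw : ∀ t, 0 ≤ w t)
    (hf : ∑' t : Node, ENNReal.ofReal (w t * f t ^ 2) ≤ 1) (P : Finset Node) :
    ∑ u ∈ P, w u * f u ^ 2 ≤ 1 := by
  rw [← ENNReal.ofReal_le_one,
    ENNReal.ofReal_sum_of_nonneg fun u _ => mul_nonneg (hw u) (sq_nonneg (f u))]
  exact (ENNReal.sum_le_tsum P).trans hf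

lemma wgt_two (t : Node) : wgt 2 t = ((1 + (t.length : ℝ)) ^ 2)⁻¹ := by
  rw [wgt, Real.rpow_neg (by positivity), Real.rpow_two]

lemma sum_branchFrom_wgt_two_le (k : ℕ) (t : Node) :
    ∑ u ∈ branchFrom k t, wgt 2 u ≤ 2 / (k + 1) := by
  calc ∑ u ∈ branchFrom k t, wgt 2 u
      = ∑ l ∈ Finset.Ico k (t.length + 1), (((l + 1 : ℕ) : ℝ) ^ 2)⁻¹ := by
        rw [sum_branchFrom]
        refine Finset.sum_congr rfl fun l hl => ?_
        have hlen : (t.take l).length = l := by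
          simpa using Nat.lt_succ_iff.1 (Finset.mem_Ico.1 hl).2
        rw [wgt_two, hlen, Nat.cast_add_one, add_comm]
    _ = ∑ i ∈ Finset.Ico (k + 1) (t.length + 1 + 1), ((i : ℝ) ^ 2)⁻¹ :=
        Finset.sum_Ico_add' (fun i : ℕ => ((i : ℝ) ^ 2)⁻¹) _ _ _
    _ ≤ 2 / (k + 1) := sum_Ioo_inv_sq_le k _

variable {w f : Node → ℝ} {K : ℝ} {m : ℕ}

lemma anchorCode_mem_budgetCodes (hK0 : 0 < K) (hm : 0 < m) (hw : ∀ t, 0 ≤ w t)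
    (hK : ∀ k t, ∑ u ∈ branchFrom k t, w u ≤ K / (k + 1))
    (hf : ∀ P : Finset Node, ∑ u ∈ P, w u * f u ^ 2 ≤ 1) :
    anchorCode (w * f) √(K / m) m ∈ budgetCodes m := by
  have hδ : √(K / m) ^ 2 = K / m := Real.sq_sqrt (by positivity)
  have hvalue : ∀ s, |(∑ u ∈ branchFrom 0 s, (w * f) u) / √(K / m)| ≤ m := by
    intro s
    have hsum := sq_sum_branchFrom_le_of_sum_le_one hw hK hf 0 s
    rw [Nat.cast_zero, zero_add, div_one] at hsum
    refine abs_le_of_sq_le_sq ?_ (Nat.cast_nonneg m)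
    calc ((∑ u ∈ branchFrom 0 s, (w * f) u) / √(K / m)) ^ 2
        ≤ K / (K / m) := by
          rw [div_pow, hδ]
          exact div_le_div_of_nonneg_right hsum (by positivity)
      _ = m := div_div_cancel₀ hK0.ne'
      _ ≤ (m : ℝ) ^ 2 := by exact_mod_cast Nat.le_self_pow two_ne_zero m
  have hcost : ∑ s ∈ anchors (w * f) √(K / m) m, (s.length + 1) ≤ m := by
    have h := sq_mul_sum_anchors_le (δ := √(K / m)) (Λ := m) (Real.sqrt_nonneg _) hw hK hf
    rw [hδ, div_mul_eq_mul_div, div_le_iff₀ (by positivity), mul_le_mul_iff_right₀ hK0] at h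
    exact_mod_cast h
  rw [budgetCodes, Finset.mem_filter, Finset.mem_powerset]
  constructor
  · refine Finset.image_subset_iff.2 fun s hs => Finset.mem_product.2 ⟨?_, ?_⟩
    · exact (List.finite_length_lt Bool m).mem_toFinset.2 (isAnchor_iff.1 (mem_anchors.1 hs)).1
    · obtain ⟨hlower, hupper⟩ := abs_le.1 (hvalue s)
      exact Finset.mem_Icc.2 ⟨Int.le_floor.2 (by exact_mod_cast hlower),
        by exact_mod_cast (Int.floor_le _).trans hupper⟩
  · rwa [anchorCode, Finset.sum_image fun s _ s' _ h => congrArg Prod.fst h]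

theorem exists_cover_card_le_two_pow_four_mul (hK0 : 0 < K) (hm : 0 < m) (hw : ∀ t, 0 ≤ w t)
    (hK : ∀ k t, ∑ u ∈ branchFrom k t, w u ≤ K / (k + 1)) :
    ∃ N : Finset (Node → ℝ), N.card ≤ 2 ^ (4 * m + 1) ∧
      ∀ f : Node → ℝ, (∀ P : Finset Node, ∑ u ∈ P, w u * f u ^ 2 ≤ 1) →
        ∃ g ∈ N, ∀ t, |Vop w f t - g t| ≤ 3 * √(K / m) := by
  classical
  have htail : ∀ f : Node → ℝ, (∀ P : Finset Node, ∑ u ∈ P, w u * f u ^ 2 ≤ 1) →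
      ∀ k, m ≤ k → ∀ t, |∑ u ∈ branchFrom k t, (w * f) u| ≤ √(K / m) := by
    intro f hf k hk t
    refine Real.abs_le_sqrt ((sq_sum_branchFrom_le_of_sum_le_one hw hK hf k t).trans ?_)
    gcongr
    exact_mod_cast hk.trans (Nat.le_succ k)
  obtain ⟨R, hcard, hball, hrep⟩ := exists_finset_representatives
    (A := {f : Node → ℝ | ∀ P : Finset Node, ∑ u ∈ P, w u * f u ^ 2 ≤ 1})
    fun f hf => anchorCode_mem_budgetCodes hK0 hm hw hK hf
  refine ⟨R.image (Vop w), Finset.card_image_le.trans (hcard.trans (card_budgetCodes_le m)),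
    fun f hf => ?_⟩
  obtain ⟨r, hr, hcode⟩ := hrep f hf
  refine ⟨Vop w r, Finset.mem_image_of_mem _ hr, fun t => ?_⟩
  rw [Vop_eq_sum_branchFrom, Vop_eq_sum_branchFrom]
  exact abs_sum_sub_sum_le_of_anchorCode_eq (Real.sqrt_pos.2 (by positivity)) (htail f hf)
    (htail r (hball r hr)) hcode.symm t

theorem exists_cover_card_le_two_pow_pred (hK0 : 0 < K) (hw : ∀ t, 0 ≤ w t)
    (hK : ∀ k t, ∑ u ∈ branchFrom k t, w u ≤ K / (k + 1)) {n : ℕ} (hn : 0 < n) :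
    ∃ N : Finset (Node → ℝ), N.card ≤ 2 ^ (n - 1) ∧
      ∀ f : Node → ℝ, (∀ P : Finset Node, ∑ u ∈ P, w u * f u ^ 2 ≤ 1) →
        ∃ g ∈ N, ∀ t, |Vop w f t - g t| ≤ 9 * √(K / n) := by
  rcases lt_or_ge n 6 with hsmall | hlarge
  · refine ⟨{0}, by simpa using Nat.one_le_two_pow, fun f hf => ⟨0, by simp, fun t => ?_⟩⟩
    have hsq := sq_sum_branchFrom_le_of_sum_le_one hw hK hf 0 t
    rw [Nat.cast_zero, zero_add, div_one] at hsq
    have hn9 : (n : ℝ) ≤ 9 ^ 2 := by exact_mod_cast hsmall.le.trans (by norm_num)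
    calc |Vop w f t - (0 : Node → ℝ) t| = |∑ u ∈ branchFrom 0 t, w u * f u| := by
          rw [Vop_eq_sum_branchFrom, Pi.zero_apply, sub_zero]
      _ ≤ √K := Real.abs_le_sqrt hsq
      _ ≤ √(9 ^ 2 * (K / n)) := by
          refine Real.sqrt_le_sqrt ?_
          rw [← mul_div_assoc, le_div_iff₀ (by positivity), mul_comm]
          gcongr
      _ = 9 * √(K / n) := by rw [Real.sqrt_mul (by positivity), Real.sqrt_sq (by norm_num)]
  · obtain ⟨m, hm, hmn, hnm⟩ : ∃ m, 0 < m ∧ 4 * m + 1 ≤ n - 1 ∧ n ≤ 9 * m :=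
      ⟨(n - 2) / 4, by omega, by omega, by omega⟩
    obtain ⟨N, hcard, hN⟩ := exists_cover_card_le_two_pow_four_mul hK0 hm hw hK
    have hradius : 3 * √(K / m) ≤ 9 * √(K / n) := by
      have hle : K / m ≤ 3 ^ 2 * (K / n) := by
        rw [← mul_div_assoc, div_le_div_iff₀ (by positivity) (by positivity)]
        have : (n : ℝ) ≤ 9 * m := by exact_mod_cast hnm
        nlinarith
      have := Real.sqrt_le_sqrt hle
      rw [Real.sqrt_mul (by positivity), Real.sqrt_sq (by norm_num)] at this
      linarith
    refine ⟨N, hcard.trans (Nat.pow_le_pow_right two_pos hmn), fun f hf => ?_⟩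
    obtain ⟨g, hg, hgt⟩ := hN f hf
    exact ⟨g, hg, fun t => (hgt t).trans hradius⟩

end Operator

theorem entropy_upper_bound_critical_V_general {w : Node → ℝ} (hw : ∀ t, 0 ≤ w t) {K : ℝ}
    (hK0 : 0 < K) (hK : ∀ k t, ∑ u ∈ branchFrom k t, w u ≤ K / (k + 1)) :
    ∃ C : ℝ, 0 < C ∧ ∀ n : ℕ, 0 < n → ∀ ε : ℝ, C * (n : ℝ) ^ (-(1 : ℝ) / 2) < ε →
      ∃ N : Finset (Node → ℝ), N.card ≤ 2 ^ (n - 1) ∧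
        ∀ f : Node → ℝ, (∑' t : Node, ENNReal.ofReal (w t * f t ^ 2)) ≤ 1 →
          ∃ g ∈ N, ∀ t : Node, |Vop w f t - g t| ≤ ε := by
  refine ⟨9 * √K, by positivity, fun n hn ε hε => ?_⟩
  have hrate : 9 * √(K / n) = 9 * √K * (n : ℝ) ^ (-(1 : ℝ) / 2) := by
    rw [neg_div, Real.rpow_neg (Nat.cast_nonneg n), ← Real.sqrt_eq_rpow, Real.sqrt_div hK0.le]
    ring
  obtain ⟨N, hcard, hN⟩ := exists_cover_card_le_two_pow_pred hK0 hw hK hn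
  refine ⟨N, hcard, fun f hf => ?_⟩
  obtain ⟨g, hg, hgt⟩ := hN f (sum_mul_sq_le_one_of_tsum_le_one hw hf)
  exact ⟨g, hg, fun t => (hgt t).trans (hrate.trans_lt hε).le⟩

/-- Critical case `β = 2`: upper bound `e_n(V) ≤ C n^{-1/2}` for the operator
`V : ℓ₂(T,W) → ℓ∞(T)` with weight `w(t) = (1+|t|)^{-2}`: for every radius `ε`
exceeding the bound, the image of the unit ball of `ℓ₂(T,W)` under `V` can be
covered by `2^{n-1}` balls of radius `ε` in the supremum norm of `ℓ∞(T)`. -/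
theorem entropy_upper_bound_critical_V :
    ∃ C : ℝ, 0 < C ∧ ∀ n : ℕ, 0 < n → ∀ ε : ℝ, C * (n : ℝ) ^ (-(1 : ℝ) / 2) < ε →
      ∃ N : Finset (Node → ℝ), N.card ≤ 2 ^ (n - 1) ∧
        ∀ f : Node → ℝ, (∑' t : Node, ENNReal.ofReal (wgt 2 t * f t ^ 2)) ≤ 1 →
          ∃ g ∈ N, ∀ t : Node, |Vop (wgt 2) f t - g t| ≤ ε :=
  entropy_upper_bound_critical_V_general (fun t => (wgt_two t).symm ▸ by positivity) two_pos
    sum_branchFrom_wgt_two_le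
end
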